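/- Let X be an n×n matrix with ‖X‖ ≤ 1, and let p be an even integer with p ≥ 2 log n. For δ ∈ (0,1), ρ ∈ (0, 0.5), and any λ ∈ (0,1), one has (E ‖R_δ X R_δ‖^p)^{1/p} ≤ 60 [ δ^λ + ρ^{-λ} (E ‖R_ρ X R_ρ‖^p)^{1/p} ]. If X is self-adjoint, the constant 60 may be replaced by 30. -/

import Mathlib

/-!
Write `F s = E ‖R_s X R_s‖ ^ p` with `p = 2 m`, and let `A = R_s X R_s`. Since `Aᴴ A` is positive
semidefinite, `‖A‖ ^ p ≤ trace ((Aᴴ A) ^ m) ≤ n ‖A‖ ^ p`. As `R_s` is idempotent, this trace equals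
`trace ((R_s Xᴴ R_s X) ^ m)`, in which the selectors appear to degree at most `p`; its expectation
is therefore a polynomial `P` in `s` of degree at most `p`, with `F ≤ |P| ≤ n F` on `[0, 1]`
(`exists_comparison_polynomial`).

A polynomial of degree at most `d` bounded by `M` on `[0, 1]` has absolute coefficient sum at most
`8 ^ d M` (`sum_norm_coeff_le`, by Lagrange interpolation at the nodes `j / d`; this replaces
Markov's coefficient bound). On `[0, 1]` one has `F ≤ 1`, and on `[0, ρ]` one has `F ≤ F ρ` by a
coupling argument (`compressMoment_mul_le`). Applied to `P` and to `P (ρ ·)`, the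
coefficient bound gives `∑ |c_k| ≤ 8 ^ p n` and `∑ |c_k| ρ ^ k ≤ 8 ^ p n F ρ`. The first is used for
the terms of `P δ` with `k > λ p`, the second for those with `k ≤ λ p`, so that
`F δ ≤ 8 ^ p n (δ ^ (λ p) + ρ ^ (-λ p) F ρ)`. The hypothesis on `p` gives `n ≤ e ^ p ≤ 3 ^ p`,
and `8 * 3 ≤ 30`. Working with `Aᴴ A` rather than `A` makes self-adjointness of `X` unnecessary, so
the constant `30` holds for every `X`.
-/

open scoped BigOperators

/-- Spectral norm: operator norm of a matrix as a map `ℓ₂ⁿ → ℓ₂ᵐ`. -/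
noncomputable def specNorm {m n : ℕ} (A : Matrix (Fin m) (Fin n) ℂ) : ℝ :=
  ‖LinearMap.toContinuousLinearMap (Matrix.toEuclideanLin A)‖

/-- Maximum Euclidean column norm, i.e. the `ℓ₁ → ℓ₂` operator norm. -/
noncomputable def colNorm {m n : ℕ} (A : Matrix (Fin m) (Fin n) ℂ) : ℝ :=
  ⨆ j, Real.sqrt (∑ i, ‖A i j‖ ^ 2)

/-- The diagonal 0–1 projector onto the coordinates in `s`. -/
def projOf {n : ℕ} (s : Finset (Fin n)) : Matrix (Fin n) (Fin n) ℂ :=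
  Matrix.diagonal fun i => if i ∈ s then 1 else 0

/-- Diagonal 0–1 matrix determined by a boolean vector. -/
def bernM {n : ℕ} (f : Fin n → Bool) : Matrix (Fin n) (Fin n) ℂ :=
  Matrix.diagonal fun i => if f i then 1 else 0

/-- Probability weight of the outcome `f` for i.i.d. Bernoulli(ρ) selectors. -/
noncomputable def bw {n : ℕ} (ρ : ℝ) (f : Fin n → Bool) : ℝ :=
  ∏ i, if f i then ρ else 1 - ρ

section PolynomialBounds
open Polynomial

/-! ### Coefficients of polynomials bounded on the unit interval -/

/-- The product on the left is the absolute coefficient sum of the `j`-th Lagrange basis polynomial with nodes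
`0, 1 / d, …, 1`. Its numerator is largest for `j = 0`, where it is `(2 d)! / d!`. -/
theorem prod_node_ratio_le (d j : ℕ) (hj : j ≤ d) :
    ∏ i ∈ (Finset.range (d + 1)).erase j, ((d + i : ℝ) / |(j : ℝ) - i|) ≤ 4 ^ d * d.choose j := by
  have hden : ∏ i ∈ (Finset.range (d + 1)).erase j, |(j : ℝ) - i| = j.factorial * (d - j).factorial := by
    have hsplit : (Finset.range (d + 1)).erase j = Finset.range j ∪ Finset.Ico (j + 1) (d + 1) := by
      ext i; simp; omega
    rw [hsplit, Finset.prod_union]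
    · congr 1
      · rw [← Finset.prod_range_reflect, ← Finset.prod_range_add_one_eq_factorial]
        push_cast
        refine Finset.prod_congr rfl fun i hi => ?_
        have hi' := Finset.mem_range.1 hi
        rw [show j - 1 - i = j - (i + 1) by omega, Nat.cast_sub (by omega)]
        push_cast
        rw [abs_of_nonneg] <;> [ring; (ring_nf; positivity)]
      · rw [Finset.prod_Ico_eq_prod_range, ← Finset.prod_range_add_one_eq_factorial]
        rw [show d + 1 - (j + 1) = d - j by omega]
        push_cast
        refine Finset.prod_congr rfl fun i hi => ?_
        rw [abs_of_nonpos] <;> ring_nf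
        linarith [(Nat.cast_nonneg i : (0 : ℝ) ≤ i)]
    · rw [Finset.disjoint_left]; intro a; simp; omega
  have hnum : ∏ i ∈ (Finset.range (d + 1)).erase j, (d + i : ℝ) ≤ 4 ^ d * d.factorial := by
    rcases Nat.eq_zero_or_pos d with rfl | hd
    · obtain rfl : j = 0 := by omega
      simp
    have h1 : (∏ i ∈ (Finset.range (d + 1)).erase j, (d + i : ℝ)) ≤
        ∏ i ∈ Finset.range d, (d + (i + 1 : ℕ) : ℝ) := by
      have h2 := Finset.mul_prod_erase (Finset.range (d + 1)) (fun i : ℕ => (d + i : ℝ))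
        (Finset.mem_range.2 (by omega : j < d + 1))
      rw [Finset.prod_range_succ'] at h2
      have hd' : (0 : ℝ) < d := by exact_mod_cast hd
      have h3 : 0 ≤ ∏ i ∈ (Finset.range (d + 1)).erase j, (d + i : ℝ) := by positivity
      have h4 : (0 : ℝ) ≤ j := by positivity
      simp only [Nat.cast_zero, add_zero] at h2
      nlinarith [mul_nonneg h4 h3]
    have h5 : (∏ i ∈ Finset.range d, (d + (i + 1 : ℕ) : ℝ)) = d.factorial * (2 * d).choose d := by
      rw [two_mul]
      have := Nat.ascFactorial_eq_factorial_mul_choose d d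
      rw [Nat.ascFactorial_eq_prod_range] at this
      rw [← Nat.cast_mul, ← this]
      push_cast
      exact Finset.prod_congr rfl fun i _ => by ring
    have h6 : ((2 * d).choose d : ℝ) ≤ 4 ^ d := by
      have := Nat.choose_le_two_pow (2 * d) d
      rw [pow_mul] at this
      exact_mod_cast this
    rw [h5] at h1
    have : (0 : ℝ) < d.factorial := by positivity
    nlinarith
  rw [Finset.prod_div_distrib, hden, Nat.cast_choose ℝ hj, ← mul_div_assoc]
  gcongr

/-- `Q` majorizes `P` coefficientwise. -/
def Majorizes (Q : ℝ[X]) (P : ℂ[X]) : Prop := ∀ k, ‖P.coeff k‖ ≤ Q.coeff k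

theorem Majorizes.mul {P P' : ℂ[X]} {Q Q' : ℝ[X]} (h : Majorizes Q P) (h' : Majorizes Q' P') :
    Majorizes (Q * Q') (P * P') := by
  intro k
  rw [coeff_mul, coeff_mul]
  refine (norm_sum_le _ _).trans (Finset.sum_le_sum fun x _ => ?_)
  rw [norm_mul]
  exact mul_le_mul (h _) (h' _) (norm_nonneg _) ((norm_nonneg _).trans (h _))

theorem Majorizes.prod {ι : Type*} (s : Finset ι) {P : ι → ℂ[X]} {Q : ι → ℝ[X]}
    (h : ∀ i ∈ s, Majorizes (Q i) (P i)) : Majorizes (∏ i ∈ s, Q i) (∏ i ∈ s, P i) := by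
  classical
  induction s using Finset.induction_on with
  | empty =>
    intro k
    rw [Finset.prod_empty, Finset.prod_empty, coeff_one, coeff_one]
    split_ifs <;> simp
  | insert a s ha ih =>
    rw [Finset.prod_insert ha, Finset.prod_insert ha]
    exact (h a (Finset.mem_insert_self a s)).mul
      (ih fun i hi => h i (Finset.mem_insert_of_mem hi))

theorem Majorizes.sum_le {P : ℂ[X]} {Q : ℝ[X]} (h : Majorizes Q P) (N : ℕ) :
    ∑ k ∈ Finset.range N, ‖P.coeff k‖ ≤ Q.eval 1 := by
  have hQ : ∀ k, 0 ≤ Q.coeff k := fun k => (norm_nonneg _).trans (h k)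
  rw [eval_eq_sum_range' (lt_of_lt_of_le (Nat.lt_succ_self _) (le_max_right N (Q.natDegree + 1)))]
  simp only [one_pow, mul_one]
  exact (Finset.sum_le_sum fun k _ => h k).trans
    (Finset.sum_le_sum_of_subset_of_nonneg (Finset.range_mono (le_max_left _ _)) fun k _ _ => hQ k)

theorem sum_coeff_basis_le (d j : ℕ) (hd : 0 < d) (hj : j ≤ d) (N : ℕ) :
    ∑ k ∈ Finset.range N,
      ‖(Lagrange.basis (Finset.range (d + 1)) (fun i : ℕ => (i / d : ℂ)) j).coeff k‖
      ≤ 4 ^ d * d.choose j := by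
  have hd' : (0 : ℝ) < d := by exact_mod_cast hd
  have hmaj : Majorizes (∏ i ∈ (Finset.range (d + 1)).erase j,
      (C |(j / d : ℝ) - i / d|⁻¹ * (X + C (i / d : ℝ))))
      (Lagrange.basis (Finset.range (d + 1)) (fun i : ℕ => (i / d : ℂ)) j) := by
    refine Majorizes.prod _ fun i _ => ?_
    refine Majorizes.mul ?_ ?_
    · intro k
      rw [coeff_C, coeff_C]
      split_ifs
      · rw [norm_inv]
        have : ((j / d : ℂ) - i / d) = ((j / d - i / d : ℝ) : ℂ) := by push_cast; ring
        rw [this, Complex.norm_real, Real.norm_eq_abs]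
      · simp
    · intro k
      rw [coeff_sub, coeff_add, coeff_X, coeff_X, coeff_C, coeff_C]
      have h0 : (i / d : ℂ) = ((i / d : ℝ) : ℂ) := by push_cast; ring
      have h1 : ‖(i / d : ℂ)‖ = (i / d : ℝ) := by
        rw [h0, Complex.norm_real, Real.norm_of_nonneg (by positivity)]
      refine (norm_sub_le _ _).trans (add_le_add ?_ ?_)
      · split_ifs <;> simp
      · split_ifs
        · exact h1.le
        · simp
  refine (hmaj.sum_le N).trans (le_trans (le_of_eq ?_) (prod_node_ratio_le d j hj))
  rw [eval_prod]
  refine Finset.prod_congr rfl fun i _ => ?_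
  rw [eval_mul, eval_C, eval_add, eval_X, eval_C, ← sub_div, abs_div, abs_of_pos hd']
  rw [inv_div, div_mul_eq_mul_div]
  congr 1
  field_simp

/-- A polynomial of degree at most `d` bounded by `M` on `[0, 1]` has absolute coefficient sum at
most `8 ^ d * M`. -/
theorem sum_norm_coeff_le (d : ℕ) (hd : 0 < d) (P : ℂ[X]) (hP : P.natDegree ≤ d) (M : ℝ)
    (hM : ∀ t : ℝ, 0 ≤ t → t ≤ 1 → ‖P.eval (t : ℂ)‖ ≤ M) :
    ∑ k ∈ Finset.range (d + 1), ‖P.coeff k‖ ≤ 8 ^ d * M := by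
  have hd' : (0 : ℝ) < d := by exact_mod_cast hd
  have hinj : Set.InjOn (fun i : ℕ => (i / d : ℂ)) (Finset.range (d + 1)) := by
    intro a _ b _ hab
    have : (d : ℂ) ≠ 0 := by exact_mod_cast hd.ne'
    simp only [div_left_inj' this] at hab
    exact_mod_cast hab
  have hdeg : P.degree < (Finset.range (d + 1)).card := by
    rw [Finset.card_range]
    exact lt_of_le_of_lt degree_le_natDegree (by exact_mod_cast Nat.lt_succ_of_le hP)
  have hinterp := Lagrange.eq_interpolate hinj hdeg
  rw [Lagrange.interpolate_apply] at hinterp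
  have hM0 : 0 ≤ M := (norm_nonneg _).trans (hM 0 le_rfl zero_le_one)
  calc ∑ k ∈ Finset.range (d + 1), ‖P.coeff k‖
      ≤ ∑ k ∈ Finset.range (d + 1), ∑ j ∈ Finset.range (d + 1), M *
        ‖(Lagrange.basis (Finset.range (d + 1)) (fun i : ℕ => (i / d : ℂ)) j).coeff k‖ := by
        refine Finset.sum_le_sum fun k _ => ?_
        conv_lhs => rw [hinterp, finsetSum_coeff]
        refine (norm_sum_le _ _).trans (Finset.sum_le_sum fun j hj => ?_)
        rw [coeff_C_mul, norm_mul]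
        gcongr
        have h0 : (j / d : ℂ) = ((j / d : ℝ) : ℂ) := by push_cast; ring
        rw [h0]
        refine hM _ (by positivity) ?_
        rw [div_le_one hd']
        exact_mod_cast Nat.le_of_lt_succ (Finset.mem_range.1 hj)
    _ ≤ ∑ j ∈ Finset.range (d + 1), M * (4 ^ d * d.choose j) := by
        rw [Finset.sum_comm]
        refine Finset.sum_le_sum fun j hj => ?_
        rw [← Finset.mul_sum]
        gcongr
        exact sum_coeff_basis_le d j hd (Nat.le_of_lt_succ (Finset.mem_range.1 hj)) _
    _ = 8 ^ d * M := by
        rw [← Finset.mul_sum, ← Finset.mul_sum]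
        have := Nat.sum_range_choose d
        rw [← Nat.cast_sum, this]
        push_cast
        rw [← mul_pow]; norm_num; ring

end PolynomialBounds

/-! ### Spectral norms and traces of compressions -/

section Norms
open scoped Matrix Matrix.Norms.L2Operator ComplexOrder

variable {n : ℕ}

theorem specNorm_eq (A : Matrix (Fin n) (Fin n) ℂ) : specNorm A = ‖A‖ := rfl

/-- The spectral norm is at most the Frobenius norm. -/
theorem norm_sq_le_trace (C : Matrix (Fin n) (Fin n) ℂ) : ‖C‖ ^ 2 ≤ ‖(Cᴴ * C).trace‖ := by
  have htr : (Cᴴ * C).trace = ((∑ i, ∑ j, ‖C i j‖ ^ 2 : ℝ) : ℂ) := by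
    rw [Finset.sum_comm]
    simp only [Matrix.trace, Matrix.diag, Matrix.mul_apply, Matrix.conjTranspose_apply]
    push_cast
    refine Finset.sum_congr rfl fun i _ => Finset.sum_congr rfl fun j _ => ?_
    exact Complex.conj_mul' _
  have h0 : 0 ≤ ∑ i, ∑ j, ‖C i j‖ ^ 2 := by positivity
  rw [htr, Complex.norm_real, Real.norm_of_nonneg h0]
  refine (Real.le_sqrt (norm_nonneg _) h0).1 ?_
  rw [Matrix.l2_opNorm_def]
  refine ContinuousLinearMap.opNorm_le_bound _ (Real.sqrt_nonneg _) fun v => ?_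
  rw [EuclideanSpace.norm_eq, EuclideanSpace.norm_eq, ← Real.sqrt_mul h0]
  refine Real.sqrt_le_sqrt ?_
  rw [Finset.sum_mul]
  refine Finset.sum_le_sum fun i _ => ?_
  have : ‖∑ j, C i j * v j‖ ≤ ∑ j, ‖C i j‖ * ‖v j‖ :=
    (norm_sum_le _ _).trans (Finset.sum_le_sum fun j _ => (norm_mul _ _).le)
  calc _ = ‖∑ j, C i j * v j‖ ^ 2 := rfl
    _ ≤ (∑ j, ‖C i j‖ * ‖v j‖) ^ 2 := by gcongr
    _ ≤ _ := Finset.sum_mul_sq_le_sq_mul_sq _ _ _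

theorem norm_pow_le_norm_pow_of_isSelfAdjoint {H : Matrix (Fin n) (Fin n) ℂ}
    (hH : IsSelfAdjoint H) (m : ℕ) (hm : 0 < m) : ‖H‖ ^ m ≤ ‖H ^ m‖ := by
  -- The identity is known for exponents `2 ^ k`; compare with the exponent `2 ^ m ≥ m`.
  rcases (norm_nonneg H).eq_or_lt with h | h
  · rw [← h, zero_pow hm.ne']; exact norm_nonneg _
  have hlt : m < 2 ^ m := Nat.lt_two_pow_self
  have h1 := hH.norm_pow_two_pow m
  have h2 : ‖H ^ 2 ^ m‖ ≤ ‖H ^ m‖ * ‖H‖ ^ (2 ^ m - m) := by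
    conv_lhs => rw [← Nat.add_sub_cancel' hlt.le, pow_add]
    refine (norm_mul_le _ _).trans ?_
    gcongr
    exact norm_pow_le' _ (by omega)
  rw [h1] at h2
  conv_lhs at h2 => rw [← Nat.add_sub_cancel' hlt.le, pow_add]
  exact le_of_mul_le_mul_right h2 (by positivity)

theorem norm_le_trace_pow (A : Matrix (Fin n) (Fin n) ℂ) (m : ℕ) (hm : 0 < m) :
    ‖A‖ ^ (2 * m) ≤ ‖((Aᴴ * A) ^ m).trace‖ := by
  have hpsd : (Aᴴ * A).PosSemidef := Matrix.posSemidef_conjTranspose_mul_self A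
  have h1 := norm_pow_le_norm_pow_of_isSelfAdjoint (H := Aᴴ * A) hpsd.isHermitian m hm
  rw [Matrix.l2_opNorm_conjTranspose_mul_self, ← sq, ← pow_mul] at h1
  refine h1.trans ?_
  -- `(Aᴴ A) ^ m` is itself of the form `Cᴴ C`, so the Frobenius bound applies to `C`.
  obtain ⟨k, rfl | rfl⟩ := Nat.even_or_odd' m
  · have : (Aᴴ * A) ^ (2 * k) = ((Aᴴ * A) ^ k)ᴴ * (Aᴴ * A) ^ k := by
      rw [Matrix.conjTranspose_pow, hpsd.isHermitian.eq, ← pow_add, two_mul]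
    rw [this, Matrix.l2_opNorm_conjTranspose_mul_self, ← sq]
    exact norm_sq_le_trace _
  · have : (Aᴴ * A) ^ (2 * k + 1) = (A * (Aᴴ * A) ^ k)ᴴ * (A * (Aᴴ * A) ^ k) := by
      rw [Matrix.conjTranspose_mul, Matrix.conjTranspose_pow, hpsd.isHermitian.eq]
      rw [show 2 * k + 1 = k + 1 + k by ring, pow_add, pow_succ]
      simp only [mul_assoc]
    rw [this, Matrix.l2_opNorm_conjTranspose_mul_self, ← sq]
    exact norm_sq_le_trace _

theorem norm_trace_le (B : Matrix (Fin n) (Fin n) ℂ) : ‖B.trace‖ ≤ n * ‖B‖ := by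
  have : ∀ i, ‖B i i‖ ≤ ‖B‖ := fun i => by
    have h := Matrix.l2_opNorm_mulVec B (EuclideanSpace.single i 1)
    rw [PiLp.norm_single, norm_one, mul_one] at h
    refine le_trans ?_ ((PiLp.norm_apply_le _ i).trans h)
    simp
  refine (norm_sum_le _ _).trans ((Finset.sum_le_sum fun i _ => this i).trans ?_)
  simp

theorem trace_pow_le (A : Matrix (Fin n) (Fin n) ℂ) (m : ℕ) (hm : 0 < m) :
    ‖((Aᴴ * A) ^ m).trace‖ ≤ n * ‖A‖ ^ (2 * m) := by
  refine (norm_trace_le _).trans ?_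
  gcongr
  rw [pow_mul, sq, ← Matrix.l2_opNorm_conjTranspose_mul_self]
  exact norm_pow_le' _ hm

theorem trace_pow_eq_norm (A : Matrix (Fin n) (Fin n) ℂ) (m : ℕ) :
    ((Aᴴ * A) ^ m).trace = (‖((Aᴴ * A) ^ m).trace‖ : ℂ) := by
  have h := ((Matrix.posSemidef_conjTranspose_mul_self A).pow m).trace_nonneg
  exact (Complex.norm_of_nonneg' h).symm

theorem norm_bernM_le (f : Fin n → Bool) : ‖bernM f‖ ≤ 1 := by
  rw [bernM, Matrix.l2_opNorm_diagonal]
  refine (pi_norm_le_iff_of_nonneg zero_le_one).2 fun i => ?_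
  split_ifs <;> simp

theorem norm_compress_le (f : Fin n → Bool) (X : Matrix (Fin n) (Fin n) ℂ) :
    ‖bernM f * X * bernM f‖ ≤ ‖X‖ := by
  calc _ ≤ ‖bernM f‖ * ‖X‖ * ‖bernM f‖ := (norm_mul_le _ _).trans (by gcongr; exact norm_mul_le _ _)
    _ ≤ 1 * ‖X‖ * 1 := by gcongr <;> exact norm_bernM_le f
    _ = _ := by ring

theorem bernM_mul (f g : Fin n → Bool) : bernM f * bernM g = bernM fun i => f i && g i := by
  rw [bernM, bernM, bernM, Matrix.diagonal_mul_diagonal]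
  congr 1; ext i
  cases f i <;> cases g i <;> simp

theorem bernM_conjTranspose (f : Fin n → Bool) : (bernM f)ᴴ = bernM f := by
  rw [bernM, Matrix.diagonal_conjTranspose]
  congr 1; ext i
  cases h : f i <;> simp [h]

theorem norm_compress_and_le (f g : Fin n → Bool) (X : Matrix (Fin n) (Fin n) ℂ) :
    specNorm (bernM (fun i => f i && g i) * X * bernM (fun i => f i && g i))
      ≤ specNorm (bernM f * X * bernM f) := by
  have : bernM (fun i => f i && g i) * X * bernM (fun i => f i && g i)
      = bernM g * (bernM f * X * bernM f) * bernM g := by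
    have hc : bernM f * bernM g = bernM g * bernM f := by
      rw [bernM_mul, bernM_mul]; simp only [Bool.and_comm]
    calc _ = (bernM f * bernM g) * X * (bernM f * bernM g) := by rw [bernM_mul]
      _ = (bernM g * bernM f) * X * (bernM f * bernM g) := by rw [← hc]
      _ = _ := by simp only [mul_assoc]
  rw [this]
  exact norm_compress_le g _

/-- One factor `R` is absorbed by idempotence and cyclicity of the trace, which halves the degree
of the trace in the selectors. -/
theorem trace_compress (f : Fin n → Bool) (X : Matrix (Fin n) (Fin n) ℂ) (m : ℕ) :
    (((bernM f * X * bernM f)ᴴ * (bernM f * X * bernM f)) ^ m).trace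
      = (((bernM f * Xᴴ) * (bernM f * X)) ^ m).trace := by
  have hR : bernM f * bernM f = bernM f := by rw [bernM_mul]; simp
  rcases m with _ | k
  · simp
  set R := bernM f
  set Y := R * Xᴴ * (R * X) with hY
  have h1 : (R * X * R)ᴴ * (R * X * R) = Y * R := by
    rw [Matrix.conjTranspose_mul, Matrix.conjTranspose_mul, bernM_conjTranspose, hY]
    simp only [mul_assoc]
    rw [← mul_assoc R R, hR]
  have h2 : R * Y = Y := by
    rw [hY]; simp only [← mul_assoc]; rw [hR]
  rw [h1, pow_succ, ← mul_assoc, mul_pow_mul, Matrix.trace_mul_comm, ← mul_assoc, h2,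
    ← pow_succ']

end Norms

/-! ### Expectations of low-degree functions of the selectors -/

/-- The space of functions of the selectors spanned by monomials of degree at most `k`.
The selectors are idempotent, so the monomials are indexed by sets of coordinates. -/
def lowDeg (n k : ℕ) : Submodule ℂ ((Fin n → Bool) → ℂ) :=
  Submodule.span ℂ {φ | ∃ S : Finset (Fin n), S.card ≤ k ∧
    φ = fun f => ∏ i ∈ S, if f i then 1 else 0}

theorem lowDeg_mul {n k l : ℕ} {φ ψ : (Fin n → Bool) → ℂ} (hφ : φ ∈ lowDeg n k)
    (hψ : ψ ∈ lowDeg n l) : φ * ψ ∈ lowDeg n (k + l) := by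
  have h := Submodule.mul_mem_mul hφ hψ
  rw [lowDeg, lowDeg, Submodule.span_mul_span] at h
  refine Submodule.span_mono ?_ h
  rintro _ ⟨_, ⟨S, hS, rfl⟩, _, ⟨T, hT, rfl⟩, rfl⟩
  refine ⟨S ∪ T, (Finset.card_union_le _ _).trans (by omega), ?_⟩
  funext f
  simp only [Pi.mul_apply, Finset.prod_ite_zero, Finset.prod_const_one]
  simp only [Finset.mem_union, or_imp, forall_and]
  by_cases h1 : ∀ i ∈ S, f i = true
  · by_cases h2 : ∀ i ∈ T, f i = true
    · rw [if_pos h1, if_pos h2, if_pos ⟨h1, h2⟩, mul_one]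
    · rw [if_neg h2, if_neg (not_and_of_not_right _ h2), mul_zero]
  · rw [if_neg h1, if_neg (not_and_of_not_left _ h1), zero_mul]

theorem lowDeg_mono {n k l : ℕ} (h : k ≤ l) : lowDeg n k ≤ lowDeg n l :=
  Submodule.span_mono fun _ ⟨S, hS, he⟩ => ⟨S, hS.trans h, he⟩

theorem const_mem_lowDeg (n k : ℕ) (c : ℂ) : (fun _ => c) ∈ lowDeg n k := by
  have : (fun _ : Fin n → Bool => c) = c • fun f => ∏ i ∈ (∅ : Finset (Fin n)), if f i then 1 else 0 := by
    ext; simp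
  rw [this]
  exact Submodule.smul_mem _ _ (Submodule.subset_span ⟨∅, by simp, rfl⟩)

theorem matrix_mul_mem_lowDeg {n k l : ℕ} {A B : (Fin n → Bool) → Matrix (Fin n) (Fin n) ℂ}
    (hA : ∀ i j, (fun f => A f i j) ∈ lowDeg n k) (hB : ∀ i j, (fun f => B f i j) ∈ lowDeg n l)
    (i j : Fin n) : (fun f => (A f * B f) i j) ∈ lowDeg n (k + l) := by
  have : (fun f => (A f * B f) i j) = ∑ x, (fun f => A f i x) * (fun f => B f x j) := by
    ext f; simp [Matrix.mul_apply]
  rw [this]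
  exact Submodule.sum_mem _ fun x _ => lowDeg_mul (hA _ _) (hB _ _)

theorem bernM_mul_mem_lowDeg {n : ℕ} (X : Matrix (Fin n) (Fin n) ℂ) (i j : Fin n) :
    (fun f : Fin n → Bool => (bernM f * X) i j) ∈ lowDeg n 1 := by
  have : (fun f : Fin n → Bool => (bernM f * X) i j) = X i j • fun f => ∏ x ∈ {i}, if f x then 1 else 0 := by
    ext f; simp [bernM, Matrix.diagonal_mul]
  rw [this]
  exact Submodule.smul_mem _ _ (Submodule.subset_span ⟨{i}, by simp, rfl⟩)

open scoped Matrix in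
theorem trace_mem_lowDeg {n : ℕ} (X : Matrix (Fin n) (Fin n) ℂ) (m : ℕ) :
    (fun f => (((bernM f * Xᴴ) * (bernM f * X)) ^ m).trace) ∈ lowDeg n (2 * m) := by
  have h : ∀ m i j, (fun f => (((bernM f * Xᴴ) * (bernM f * X)) ^ m) i j) ∈ lowDeg n (2 * m) := by
    intro m
    induction m with
    | zero => intro i j; simpa using const_mem_lowDeg n 0 _
    | succ m ih =>
      intro i j
      simp only [pow_succ]
      exact matrix_mul_mem_lowDeg ih (fun i j => matrix_mul_mem_lowDeg (k := 1) (l := 1)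
        (bernM_mul_mem_lowDeg _) (bernM_mul_mem_lowDeg _) i j) i j
  have : (fun f => (((bernM f * Xᴴ) * (bernM f * X)) ^ m).trace)
      = ∑ i, fun f => (((bernM f * Xᴴ) * (bernM f * X)) ^ m) i i := by
    ext f; simp [Matrix.trace]
  rw [this]
  exact Submodule.sum_mem _ fun i _ => h m i i

theorem sum_bw_monomial {n : ℕ} (s : ℝ) (S : Finset (Fin n)) :
    ∑ f : Fin n → Bool, (bw s f : ℂ) * (∏ i ∈ S, if f i then 1 else 0) = (s : ℂ) ^ S.card := by
  have h : ∀ f : Fin n → Bool, (bw s f : ℂ) * (∏ i ∈ S, if f i then 1 else 0)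
      = ∏ i, (if f i then (s : ℂ) else if i ∈ S then 0 else 1 - s) := by
    intro f
    have h1 : (∏ i ∈ S, if f i then (1 : ℂ) else 0)
        = ∏ i, if i ∈ S then (if f i then (1 : ℂ) else 0) else 1 := by
      rw [Finset.prod_ite_mem, Finset.univ_inter]
    rw [h1, bw, Complex.ofReal_prod, ← Finset.prod_mul_distrib]
    refine Finset.prod_congr rfl fun i _ => ?_
    by_cases hf : f i <;> by_cases hi : i ∈ S <;> simp [hf, hi]
  simp_rw [h]
  rw [← Fintype.prod_sum (fun i (b : Bool) => (if b then (s : ℂ) else if i ∈ S then 0 else 1 - s))]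
  have h2 : ∀ i, (∑ b : Bool, (if b then (s : ℂ) else if i ∈ S then 0 else 1 - s))
      = if i ∈ S then (s : ℂ) else 1 := fun i => by
    by_cases hi : i ∈ S <;> simp [hi]
  simp_rw [h2]
  rw [Finset.prod_ite_mem, Finset.univ_inter, Finset.prod_const]

theorem exists_polynomial {n k : ℕ} {φ : (Fin n → Bool) → ℂ} (hφ : φ ∈ lowDeg n k) :
    ∃ P : Polynomial ℂ, P.natDegree ≤ k ∧
      ∀ s : ℝ, P.eval (s : ℂ) = ∑ f : Fin n → Bool, (bw s f : ℂ) * φ f := by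
  induction hφ using Submodule.span_induction with
  | mem φ h =>
    obtain ⟨S, hS, rfl⟩ := h
    exact ⟨Polynomial.X ^ S.card, by simpa using hS, fun s => by simp [sum_bw_monomial]⟩
  | zero => exact ⟨0, by simp, by simp⟩
  | add φ ψ _ _ h1 h2 =>
    obtain ⟨P, hP, hP'⟩ := h1
    obtain ⟨Q, hQ, hQ'⟩ := h2
    refine ⟨P + Q, (Polynomial.natDegree_add_le _ _).trans (max_le hP hQ), fun s => ?_⟩
    simp [hP', hQ', mul_add, Finset.sum_add_distrib]
  | smul c φ _ h =>
    obtain ⟨P, hP, hP'⟩ := h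
    refine ⟨c • P, (Polynomial.natDegree_smul_le _ _).trans hP, fun s => ?_⟩
    simp [hP', Finset.mul_sum, mul_left_comm]

/-! ### Bernoulli weights -/

theorem bw_nonneg {n : ℕ} {s : ℝ} (h0 : 0 ≤ s) (h1 : s ≤ 1) (f : Fin n → Bool) : 0 ≤ bw s f :=
  Finset.prod_nonneg fun i _ => by split_ifs <;> linarith

theorem sum_bw {n : ℕ} (s : ℝ) : ∑ f : Fin n → Bool, bw s f = 1 := by
  unfold bw
  rw [← Fintype.prod_sum (fun i (b : Bool) => if b then s else 1 - s)]
  simp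

/-- Coupling: the coordinatewise product of independent Bernoulli selectors with
parameters `s` and `t` has the law of Bernoulli selectors with parameter `s * t`. -/
theorem sum_bw_mul {n : ℕ} (s t : ℝ) (φ : (Fin n → Bool) → ℝ) :
    ∑ f, bw (s * t) f * φ f = ∑ g, ∑ h, bw s g * bw t h * φ (fun i => g i && h i) := by
  have key : ∀ f : Fin n → Bool, bw (s * t) f
      = ∑ g, ∑ h, bw s g * bw t h * if (fun i => g i && h i) = f then 1 else 0 := by
    intro f
    have h1 : ∀ g h : Fin n → Bool,
        (bw s g * bw t h * if (fun i => g i && h i) = f then 1 else 0)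
        = ∏ i, ((if g i then s else 1 - s) * (if h i then t else 1 - t) *
            if (g i && h i) = f i then 1 else 0) := by
      intro g h
      rw [Finset.prod_mul_distrib, Finset.prod_mul_distrib, Finset.prod_ite_zero]
      simp [bw, funext_iff]
    simp_rw [h1]
    have h2 : ∀ g : Fin n → Bool, (∑ h : Fin n → Bool, 
        ∏ i, ((if g i then s else 1 - s) * (if h i then t else 1 - t) *
            if (g i && h i) = f i then 1 else 0)) = ∏ i, ∑ c : Bool,
            ((if g i then s else 1 - s) * (if c then t else 1 - t) *
            if (g i && c) = f i then 1 else 0) := fun g => by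
      rw [Fintype.prod_sum]
    simp_rw [h2]
    rw [← Fintype.prod_sum (fun i (b : Bool) => ∑ c : Bool, ((if b then s else 1 - s) *
      (if c then t else 1 - t) * if (b && c) = f i then 1 else 0))]
    refine Finset.prod_congr rfl fun i _ => ?_
    cases f i <;> simp
    ring
  simp_rw [key, Finset.sum_mul]
  rw [Finset.sum_comm]
  refine Finset.sum_congr rfl fun g _ => ?_
  rw [Finset.sum_comm]
  refine Finset.sum_congr rfl fun h _ => ?_
  simp [mul_assoc]


/-! ### Moments of the compressed matrix and extrapolation -/

/-- `E ‖R_s X R_s‖ ^ p`, as a sum over the outcomes of the selectors. -/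
noncomputable def compressMoment {n : ℕ} (X : Matrix (Fin n) (Fin n) ℂ) (p : ℕ) (s : ℝ) : ℝ :=
  ∑ f : Fin n → Bool, bw s f * specNorm (bernM f * X * bernM f) ^ p

theorem specNorm_nonneg {n : ℕ} (A : Matrix (Fin n) (Fin n) ℂ) : 0 ≤ specNorm A := norm_nonneg _

theorem compressMoment_nonneg {n : ℕ} (X : Matrix (Fin n) (Fin n) ℂ) (p : ℕ) {s : ℝ}
    (h0 : 0 ≤ s) (h1 : s ≤ 1) : 0 ≤ compressMoment X p s :=
  Finset.sum_nonneg fun f _ => mul_nonneg (bw_nonneg h0 h1 f) (pow_nonneg (specNorm_nonneg _) _)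

theorem compressMoment_le_one {n : ℕ} {X : Matrix (Fin n) (Fin n) ℂ} (hX : specNorm X ≤ 1) (p : ℕ)
    {s : ℝ} (h0 : 0 ≤ s) (h1 : s ≤ 1) : compressMoment X p s ≤ 1 := by
  rw [← sum_bw (n := n) s]
  refine Finset.sum_le_sum fun f _ => mul_le_of_le_one_right (bw_nonneg h0 h1 f) ?_
  exact pow_le_one₀ (specNorm_nonneg _) ((norm_compress_le f X).trans hX)

/-- `compressMoment X p` is nondecreasing on `[0, 1]`: thinning the selectors of parameter `s` by independent
ones of parameter `t` only decreases the norm of the compression. -/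
theorem compressMoment_mul_le {n : ℕ} (X : Matrix (Fin n) (Fin n) ℂ) (p : ℕ) {s t : ℝ}
    (hs0 : 0 ≤ s) (hs1 : s ≤ 1) (ht0 : 0 ≤ t) (ht1 : t ≤ 1) :
    compressMoment X p (s * t) ≤ compressMoment X p s := by
  rw [compressMoment, sum_bw_mul s t (fun f => specNorm (bernM f * X * bernM f) ^ p)]
  refine Finset.sum_le_sum fun g _ => ?_
  calc _ ≤ ∑ h : Fin n → Bool, bw s g * bw t h * specNorm (bernM g * X * bernM g) ^ p := by
        refine Finset.sum_le_sum fun h _ => ?_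
        refine mul_le_mul_of_nonneg_left ?_
          (mul_nonneg (bw_nonneg hs0 hs1 g) (bw_nonneg ht0 ht1 h))
        exact pow_le_pow_left₀ (specNorm_nonneg _) (norm_compress_and_le g h X) _
    _ = _ := by
        rw [← Finset.sum_mul, ← Finset.mul_sum, sum_bw, mul_one]

theorem exists_comparison_polynomial {n : ℕ} (X : Matrix (Fin n) (Fin n) ℂ) (m : ℕ) (hm : 0 < m) :
    ∃ P : Polynomial ℂ, P.natDegree ≤ 2 * m ∧ ∀ s : ℝ, 0 ≤ s → s ≤ 1 →
      compressMoment X (2 * m) s ≤ ‖P.eval (s : ℂ)‖ ∧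
      ‖P.eval (s : ℂ)‖ ≤ n * compressMoment X (2 * m) s := by
  obtain ⟨P, hP, hP'⟩ := exists_polynomial (trace_mem_lowDeg X m)
  refine ⟨P, hP, fun s h0 h1 => ?_⟩
  set T : (Fin n → Bool) → ℝ := fun f =>
    ‖(((bernM f * X * bernM f).conjTranspose * (bernM f * X * bernM f)) ^ m).trace‖ with hT
  have heval : P.eval (s : ℂ) = ((∑ f, bw s f * T f : ℝ) : ℂ) := by
    rw [hP']
    push_cast
    refine Finset.sum_congr rfl fun f _ => ?_
    rw [← trace_compress, trace_pow_eq_norm]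
  have h2 : 0 ≤ ∑ f, bw s f * T f :=
    Finset.sum_nonneg fun f _ => mul_nonneg (bw_nonneg h0 h1 f) (norm_nonneg _)
  rw [heval, Complex.norm_real, Real.norm_of_nonneg h2, compressMoment, Finset.mul_sum]
  refine ⟨Finset.sum_le_sum fun f _ => ?_, Finset.sum_le_sum fun f _ => ?_⟩
  · exact mul_le_mul_of_nonneg_left (norm_le_trace_pow _ m hm) (bw_nonneg h0 h1 f)
  · rw [mul_left_comm]
    exact mul_le_mul_of_nonneg_left (trace_pow_le _ m hm) (bw_nonneg h0 h1 f)

theorem compressMoment_extrapolation {n : ℕ} {X : Matrix (Fin n) (Fin n) ℂ} (hX : specNorm X ≤ 1)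
    (m : ℕ) (hm : 0 < m) {δ ρ lam : ℝ} (hδ0 : 0 < δ) (hδ1 : δ < 1) (hρ0 : 0 < ρ) (hρ1 : ρ < 1) :
    compressMoment X (2 * m) δ ≤ 8 ^ (2 * m) * n *
      ((δ ^ lam) ^ (2 * m) + (ρ ^ (-lam)) ^ (2 * m) * compressMoment X (2 * m) ρ) := by
  obtain ⟨P, hdeg, hP⟩ := exists_comparison_polynomial X m hm
  have hn : (0 : ℝ) ≤ n := Nat.cast_nonneg n
  have hA : ∑ k ∈ Finset.range (2 * m + 1), ‖P.coeff k‖ ≤ 8 ^ (2 * m) * n := by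
    refine sum_norm_coeff_le (2 * m) (by omega) P hdeg n fun t h0 h1 => ?_
    exact (hP t h0 h1).2.trans (mul_le_of_le_one_right hn (compressMoment_le_one hX _ h0 h1))
  have hB : ∑ k ∈ Finset.range (2 * m + 1), ‖P.coeff k‖ * ρ ^ k
      ≤ 8 ^ (2 * m) * (n * compressMoment X (2 * m) ρ) := by
    have h := sum_norm_coeff_le (2 * m) (by omega) (P.comp (Polynomial.C (ρ : ℂ) * Polynomial.X))
      (Polynomial.natDegree_comp_le.trans ?_) (n * compressMoment X (2 * m) ρ) fun t h0 h1 => ?_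
    · refine le_trans (le_of_eq (Finset.sum_congr rfl fun k _ => ?_)) h
      rw [Polynomial.comp_C_mul_X_coeff, norm_mul, norm_pow, Complex.norm_real,
        Real.norm_of_nonneg hρ0.le]
    · exact (Nat.mul_le_mul hdeg ((Polynomial.natDegree_C_mul_le _ _).trans
        Polynomial.natDegree_X_le)).trans (mul_one _).le
    · rw [Polynomial.eval_comp, Polynomial.eval_mul, Polynomial.eval_C, Polynomial.eval_X,
        ← Complex.ofReal_mul]
      refine (hP _ (by positivity) (by nlinarith)).2.trans ?_
      exact mul_le_mul_of_nonneg_left (compressMoment_mul_le X _ hρ0.le hρ1.le h0 h1) hn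
  have hterm : ∀ k : ℕ, δ ^ k ≤ (δ ^ lam) ^ (2 * m) + (ρ ^ (-lam)) ^ (2 * m) * ρ ^ k := by
    intro k
    have h1 : 0 ≤ (δ ^ lam) ^ (2 * m) := by positivity
    have h2 : 0 ≤ (ρ ^ (-lam)) ^ (2 * m) * ρ ^ k := by positivity
    -- For `k ≤ λ p` the second term is at least `1`; for `k ≥ λ p` the first is at least `δ ^ k`.
    rcases le_total (k : ℝ) (lam * (2 * m : ℕ)) with hk | hk
    · have h3 : 1 ≤ (ρ ^ (-lam)) ^ (2 * m) * ρ ^ k := by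
        rw [← Real.rpow_mul_natCast hρ0.le, ← Real.rpow_natCast ρ k, ← Real.rpow_add hρ0]
        exact Real.one_le_rpow_of_pos_of_le_one_of_nonpos hρ0 hρ1.le (by linarith)
      have h4 : δ ^ k ≤ 1 := pow_le_one₀ hδ0.le hδ1.le
      linarith
    · have h3 : δ ^ k ≤ (δ ^ lam) ^ (2 * m) := by
        rw [← Real.rpow_mul_natCast hδ0.le, ← Real.rpow_natCast δ k]
        exact Real.rpow_le_rpow_of_exponent_ge hδ0 hδ1.le hk
      linarith
  calc compressMoment X (2 * m) δ ≤ ‖P.eval (δ : ℂ)‖ := (hP δ hδ0.le hδ1.le).1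
    _ ≤ ∑ k ∈ Finset.range (2 * m + 1), ‖P.coeff k‖ * δ ^ k := by
        rw [Polynomial.eval_eq_sum_range' (Nat.lt_succ_of_le hdeg)]
        refine (norm_sum_le _ _).trans (le_of_eq (Finset.sum_congr rfl fun k _ => ?_))
        rw [norm_mul, norm_pow, Complex.norm_real, Real.norm_of_nonneg hδ0.le]
    _ ≤ ∑ k ∈ Finset.range (2 * m + 1), (‖P.coeff k‖ * (δ ^ lam) ^ (2 * m)
          + (ρ ^ (-lam)) ^ (2 * m) * (‖P.coeff k‖ * ρ ^ k)) := by
        refine Finset.sum_le_sum fun k _ => ?_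
        have := mul_le_mul_of_nonneg_left (hterm k) (norm_nonneg (P.coeff k))
        linarith
    _ = (∑ k ∈ Finset.range (2 * m + 1), ‖P.coeff k‖) * (δ ^ lam) ^ (2 * m)
          + (ρ ^ (-lam)) ^ (2 * m) * ∑ k ∈ Finset.range (2 * m + 1), ‖P.coeff k‖ * ρ ^ k := by
        rw [Finset.sum_add_distrib, Finset.sum_mul, Finset.mul_sum]
    _ ≤ (8 ^ (2 * m) * n) * (δ ^ lam) ^ (2 * m)
          + (ρ ^ (-lam)) ^ (2 * m) * (8 ^ (2 * m) * (n * compressMoment X (2 * m) ρ)) := by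
        gcongr
    _ = _ := by ring

theorem dimension_factor_le (n p : ℕ) (h : 2 * Real.log n ≤ p) : (8 : ℝ) ^ p * n ≤ 30 ^ p := by
  have hn : (n : ℝ) ≤ 3 ^ p := by
    rcases Nat.eq_zero_or_pos n with rfl | hn
    · simp
    have hn' : (0 : ℝ) < n := by exact_mod_cast hn
    have h3 : Real.exp 1 ≤ 3 := Real.exp_one_lt_three.le
    calc (n : ℝ) = Real.exp (Real.log n) := (Real.exp_log hn').symm
      _ ≤ Real.exp p := Real.exp_le_exp.2 (by
          have : (0 : ℝ) ≤ p := Nat.cast_nonneg p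
          linarith)
      _ = Real.exp 1 ^ p := by rw [← Real.exp_nat_mul, mul_one]
      _ ≤ 3 ^ p := by gcongr
  calc (8 : ℝ) ^ p * n ≤ 8 ^ p * 3 ^ p := by gcongr
    _ = 24 ^ p := by rw [← mul_pow]; norm_num
    _ ≤ 30 ^ p := by gcongr; norm_num

/-- The bound with constant `30`; self-adjointness plays no role. -/
theorem extrapolation_thirty {n : ℕ} {X : Matrix (Fin n) (Fin n) ℂ} (hX : specNorm X ≤ 1)
    {p : ℕ} (hpe : Even p) (hplog : 2 * Real.log n ≤ (p:ℝ)) {δ ρ lam : ℝ}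
    (hδ : δ ∈ Set.Ioo (0:ℝ) 1) (hρ0 : 0 < ρ) (hρ1 : ρ < 1) (hlam : 0 < lam) :
    compressMoment X p δ ^ (1/(p:ℝ))
      ≤ 30 * (δ ^ lam + ρ ^ (-lam) * compressMoment X p ρ ^ (1/(p:ℝ))) := by
  obtain ⟨hδ0, hδ1⟩ := hδ
  have hu : 0 < δ ^ lam := Real.rpow_pos_of_pos hδ0 _
  rcases Nat.eq_zero_or_pos p with rfl | hp
  -- The exponent `1 / 0 = 0` makes both roots equal to `1`, and `1 ≤ ρ ^ (-lam)`.
  · have := Real.one_le_rpow_of_pos_of_le_one_of_nonpos hρ0 hρ1.le (neg_nonpos.2 hlam.le)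
    simp only [Nat.cast_zero, div_zero, Real.rpow_zero]
    linarith
  obtain ⟨m, rfl⟩ := hpe.two_dvd
  have hF := compressMoment_nonneg X (2 * m) hρ0.le hρ1.le
  have hp' : ((2 * m : ℕ) : ℝ) ≠ 0 := by exact_mod_cast hp.ne'
  set v := ρ ^ (-lam) * compressMoment X (2 * m) ρ ^ (1/((2 * m : ℕ) : ℝ)) with hv
  have hv0 : 0 ≤ v := by positivity
  have hvp : v ^ (2 * m) = (ρ ^ (-lam)) ^ (2 * m) * compressMoment X (2 * m) ρ := by
    rw [hv, mul_pow, ← Real.rpow_mul_natCast hF, one_div_mul_cancel hp', Real.rpow_one]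
  have key : compressMoment X (2 * m) δ ≤ (30 * (δ ^ lam + v)) ^ (2 * m) := by
    calc _ ≤ 8 ^ (2 * m) * n * ((δ ^ lam) ^ (2 * m) + v ^ (2 * m)) := by
          rw [hvp]; exact compressMoment_extrapolation hX m (by omega) hδ0 hδ1 hρ0 hρ1
      _ ≤ 30 ^ (2 * m) * (δ ^ lam + v) ^ (2 * m) := by
          refine mul_le_mul (dimension_factor_le n _ hplog)
            (pow_add_pow_le hu.le hv0 hp.ne') (by positivity) (by positivity)
      _ = _ := (mul_pow _ _ _).symm
  calc _ ≤ ((30 * (δ ^ lam + v)) ^ (2 * m)) ^ (1/((2 * m : ℕ) : ℝ)) :=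
        Real.rpow_le_rpow (compressMoment_nonneg X _ hδ0.le hδ1.le) key (by positivity)
    _ = _ := by
        rw [one_div]
        exact Real.pow_rpow_inv_natCast (by positivity) hp.ne'

/-- Bourgain–Tzafriri extrapolation bound. -/
theorem extrapolation (n : ℕ) (X : Matrix (Fin n) (Fin n) ℂ) (hX : specNorm X ≤ 1)
    (p : ℕ) (hpe : Even p) (hplog : 2 * Real.log n ≤ (p:ℝ))
    (δ ρ lam : ℝ) (hδ : δ ∈ Set.Ioo (0:ℝ) 1) (hρ : ρ ∈ Set.Ioo (0:ℝ) 0.5)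
    (hlam : lam ∈ Set.Ioo (0:ℝ) 1) :
    ((∑ f : Fin n → Bool, bw δ f * specNorm (bernM f * X * bernM f) ^ (p:ℝ)) ^ (1/(p:ℝ))
      ≤ 60 * (δ ^ lam + ρ ^ (-lam) *
          (∑ f : Fin n → Bool, bw ρ f * specNorm (bernM f * X * bernM f) ^ (p:ℝ)) ^ (1/(p:ℝ))))
    ∧ (X.IsHermitian →
      (∑ f : Fin n → Bool, bw δ f * specNorm (bernM f * X * bernM f) ^ (p:ℝ)) ^ (1/(p:ℝ))
        ≤ 30 * (δ ^ lam + ρ ^ (-lam) *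
            (∑ f : Fin n → Bool, bw ρ f * specNorm (bernM f * X * bernM f) ^ (p:ℝ)) ^ (1/(p:ℝ)))) := by
  have h30 := extrapolation_thirty hX hpe hplog hδ hρ.1 (hρ.2.trans (by norm_num)) hlam.1
  simp only [Real.rpow_natCast]
  refine ⟨h30.trans ?_, fun _ => h30⟩
  have h0 : 0 ≤ δ ^ lam := Real.rpow_nonneg hδ.1.le _
  have h1 : 0 ≤ ρ ^ (-lam) * compressMoment X p ρ ^ (1/(p:ℝ)) :=
    mul_nonneg (Real.rpow_nonneg hρ.1.le _) (Real.rpow_nonneg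
      (compressMoment_nonneg X p hρ.1.le (hρ.2.le.trans (by norm_num))) _)
  exact mul_le_mul_of_nonneg_right (by norm_num) (add_nonneg h0 h1)
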